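/- Let s ≥ 1, let 0 ≤ q ≤ s, and set n = T_s + q. Let a ≥ 1 and b ≥ 1 be integers with a + b = ρ(q) and T_a + T_b ≤ q. Then the number of partitions λ of n with deg(λ) = Δ_n, A(λ) = a, and B(λ) = b is at least q − T_a − T_b + 1. -/

import Mathlib

/-!
Let `D` be the set of part sizes of a partition of `n`, and `R` the multiset left over once one copy
of each size is removed; the multiplicity bonus counts the distinct elements of `R`. If `D` has `r`
elements and `g` gaps, its sum is at least `T r + T g`: the sizes dominate the staircase `1, …, r`,
and each gap raises everything above it. If `R` has `b` distinct elements, its sum is at least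
`T b`. Hence `T r + T g + T b ≤ n`. For `n = T s + q` with `q ≤ s` this gives `r ≤ s`. When `r = s`
the two bonuses add up to at most `ρ(q)`; when `r < s` each of them is at most `r`, so the degree is
at most `r (r + 1) ≤ s (s - 1)`. The maximal degree is thus at most `s (s - 1) + ρ(q)`.

Equality in the size bound holds for `D = {1, …, c, c + 2, c + 4, …, c + 2a}` with `c = s - a` and
`R = {1, …, b}`, which fit together since `a + b ≤ T a + T b ≤ q ≤ s`. As `a, b ≥ 1`, the slack
`q - T a - T b` may be split arbitrarily between raising the largest part and adding further copies
of `1` without changing the support or either bonus. The number of parts `1` recovers the split.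
-/

namespace PartitionDegree

/-- The `m`-th triangular number. -/
def T (m : ℕ) : ℕ := m * (m + 1) / 2

/-- The number of distinct part sizes of a partition. -/
def supp {n : ℕ} (lam : n.Partition) : ℕ := lam.parts.toFinset.card

/-- The gap-bonus count: distinct part sizes `L ≥ 2` such that `L - 1` is not a part size. -/
def gapBonus {n : ℕ} (lam : n.Partition) : ℕ :=
  (lam.parts.toFinset.filter (fun L => 2 ≤ L ∧ (L - 1) ∉ lam.parts)).card

/-- The multiplicity-bonus count: distinct part sizes occurring with multiplicity at least 2. -/
def multBonus {n : ℕ} (lam : n.Partition) : ℕ :=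
  (lam.parts.toFinset.filter (fun L => 2 ≤ lam.parts.count L)).card

/-- The degree of a partition in the partition graph. -/
def deg {n : ℕ} (lam : n.Partition) : ℕ :=
  supp lam * (supp lam - 1) + gapBonus lam + multBonus lam

/-- The maximal degree over all partitions of `n`. -/
def maxDeg (n : ℕ) : ℕ := Finset.univ.sup (fun lam : n.Partition => deg lam)

/-- `ρ(q)`: the maximum of `a + b` over pairs with `T a + T b ≤ q`. -/
noncomputable def rho (q : ℕ) : ℕ := sSup {c : ℕ | ∃ a b : ℕ, c = a + b ∧ T a + T b ≤ q}

/-- `mu` is the conjugate of `lam`: for each `k ≥ 1`, the multiplicity of `k` in `mu`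
equals (number of parts of `lam` that are `≥ k`) minus (number of parts `≥ k + 1`). -/
def IsConjugate {n : ℕ} (lam mu : n.Partition) : Prop :=
  ∀ k : ℕ, 1 ≤ k →
    mu.parts.count k =
      Multiset.countP (fun p => k ≤ p) lam.parts -
        Multiset.countP (fun p => k + 1 ≤ p) lam.parts

lemma T_succ (m : ℕ) : T (m + 1) = T m + (m + 1) := by
  simpa [T, mul_comm] using Nat.triangle_succ (m + 1)

lemma T_mono : Monotone T :=
  monotone_nat_of_le_succ fun m => (Nat.le_add_right _ _).trans_eq (T_succ m).symm

lemma le_T (m : ℕ) : m ≤ T m := by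
  cases m with
  | zero => exact Nat.zero_le _
  | succ m => exact (Nat.le_add_left _ _).trans_eq (T_succ m).symm

lemma sum_Icc_one_eq_T (m : ℕ) : ∑ i ∈ Finset.Icc 1 m, i = T m := by
  induction m with
  | zero => rfl
  | succ m ih => rw [Finset.sum_Icc_succ_top (Nat.le_add_left 1 m), ih, T_succ]

lemma add_le_rho {q a b : ℕ} (h : T a + T b ≤ q) : a + b ≤ rho q := by
  refine le_csSup ⟨q, ?_⟩ ⟨a, b, rfl, h⟩
  rintro _ ⟨x, y, rfl, hxy⟩
  exact (add_le_add (le_T x) (le_T y)).trans hxy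

/-- The elements `L ≥ 2` of `D` with `L - 1 ∉ D`: the sizes counted by the gap bonus of a partition
whose set of part sizes is `D`. -/
def gapSet (D : Finset ℕ) : Finset ℕ := D.filter fun L => 2 ≤ L ∧ L - 1 ∉ D

lemma card_gapSet_insert {m : ℕ} {D : Finset ℕ} (hm : ∀ x ∈ D, x < m) :
    (gapSet (insert m D)).card = (gapSet D).card + if 2 ≤ m ∧ m - 1 ∉ D then 1 else 0 := by
  have m_notMem : m ∉ D := fun h => (hm m h).false
  have filter_eq : D.filter (fun L => 2 ≤ L ∧ L - 1 ∉ insert m D) = gapSet D :=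
    Finset.filter_congr fun x hx => by
      have : x - 1 ≠ m := by have := hm x hx; omega
      simp only [Finset.mem_insert, this, false_or]
  have gap_iff : 2 ≤ m ∧ m - 1 ∉ insert m D ↔ 2 ≤ m ∧ m - 1 ∉ D :=
    and_congr_right fun h => by
      have : m - 1 ≠ m := by omega
      simp only [Finset.mem_insert, this, false_or]
  rw [gapSet, Finset.filter_insert, filter_eq]
  simp only [gap_iff]
  split_ifs
  · exact Finset.card_insert_of_notMem fun h => m_notMem (Finset.mem_filter.1 h).1
  · rfl

-- The predecessors of the elements of `gapSet D` are positive, distinct and outside `D`.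
lemma card_add_card_gapSet_le {m : ℕ} {D : Finset ℕ} (hD : D ⊆ Finset.Icc 1 m) :
    D.card + (gapSet D).card ≤ m := by
  have inj : Set.InjOn (· - 1) (gapSet D : Set ℕ) := fun x hx y hy hxy => by
    have := (Finset.mem_filter.1 hx).2.1
    have := (Finset.mem_filter.1 hy).2.1
    simp only at hxy
    omega
  have disj : Disjoint D ((gapSet D).image (· - 1)) := by
    refine Finset.disjoint_right.2 fun x hx => ?_
    obtain ⟨y, hy, rfl⟩ := Finset.mem_image.1 hx
    exact (Finset.mem_filter.1 hy).2.2
  have subset : D ∪ (gapSet D).image (· - 1) ⊆ Finset.Icc 1 m := by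
    refine Finset.union_subset hD (Finset.image_subset_iff.2 fun y hy => ?_)
    obtain ⟨hyD, hy2, -⟩ := Finset.mem_filter.1 hy
    have := Finset.mem_Icc.1 (hD hyD)
    exact Finset.mem_Icc.2 (by omega)
  calc D.card + (gapSet D).card = (D ∪ (gapSet D).image (· - 1)).card := by
        rw [Finset.card_union_of_disjoint disj, Finset.card_image_of_injOn inj]
    _ ≤ (Finset.Icc 1 m).card := Finset.card_le_card subset
    _ = m := Nat.card_Icc 1 m

lemma T_card_add_T_card_gapSet_le_sum {D : Finset ℕ} (hD : ∀ x ∈ D, 0 < x) :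
    T D.card + T (gapSet D).card ≤ ∑ x ∈ D, x := by
  induction D using Finset.induction_on_max with
  | empty => rfl
  | insert m D hm ih =>
    have ih := ih fun x hx => hD x (Finset.mem_insert_of_mem hx)
    have m_notMem : m ∉ D := fun h => (hm m h).false
    have le_m : (insert m D).card + (gapSet (insert m D)).card ≤ m :=
      card_add_card_gapSet_le fun x hx => Finset.mem_Icc.2
        ⟨hD x hx, (Finset.mem_insert.1 hx).elim Eq.le fun h => (hm x h).le⟩
    rw [Finset.card_insert_of_notMem m_notMem, card_gapSet_insert hm] at le_m
    rw [Finset.sum_insert m_notMem, Finset.card_insert_of_notMem m_notMem, card_gapSet_insert hm,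
      T_succ]
    split_ifs at le_m ⊢
    · rw [T_succ]
      omega
    · rw [add_zero]
      omega

/-- What remains of a multiset when one copy of each element is removed. For the parts of a
partition, the multiplicity bonus counts the distinct elements that remain. -/
def repeats {α : Type*} [DecidableEq α] (M : Multiset α) : Multiset α := M - M.dedup

lemma sum_toFinset_add_sum_repeats {α : Type*} [DecidableEq α] [AddCommMonoid α] (M : Multiset α) :
    ∑ x ∈ M.toFinset, x + (repeats M).sum = M.sum :=
  calc ∑ x ∈ M.toFinset, x + (repeats M).sum = M.dedup.sum + (M - M.dedup).sum :=
        congrArg (· + _) (Finset.sum_val _).symm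
    _ = M.sum := by rw [← Multiset.sum_add, add_tsub_cancel_of_le M.dedup_le]

lemma T_card_toFinset_le_sum {M : Multiset ℕ} (hM : ∀ x ∈ M, 0 < x) :
    T M.toFinset.card ≤ M.sum :=
  calc T M.toFinset.card ≤ ∑ x ∈ M.toFinset, x :=
        le_of_add_le_left
          (T_card_add_T_card_gapSet_le_sum fun x hx => hM x (Multiset.mem_toFinset.1 hx))
    _ ≤ M.sum := (Nat.le_add_right _ _).trans_eq (sum_toFinset_add_sum_repeats M)

lemma gapBonus_eq_card_gapSet {n : ℕ} (lam : n.Partition) :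
    gapBonus lam = (gapSet lam.parts.toFinset).card := by
  simp only [gapBonus, gapSet, Multiset.mem_toFinset]

lemma multBonus_eq_card_repeats {n : ℕ} (lam : n.Partition) :
    multBonus lam = (repeats lam.parts).toFinset.card := by
  unfold multBonus repeats
  congr 1
  ext x
  by_cases hx : x ∈ lam.parts
  · simp [Multiset.mem_sub, hx, Nat.succ_le_iff]
  · simp [Multiset.mem_sub, hx]

lemma T_supp_add_T_gapBonus_add_T_multBonus_le {n : ℕ} (lam : n.Partition) :
    T (supp lam) + T (gapBonus lam) + T (multBonus lam) ≤ n := by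
  have sizes_le : T (supp lam) + T (gapBonus lam) ≤ ∑ x ∈ lam.parts.toFinset, x := by
    rw [gapBonus_eq_card_gapSet]
    exact T_card_add_T_card_gapSet_le_sum fun x hx => lam.parts_pos (Multiset.mem_toFinset.1 hx)
  have repeats_le : T (multBonus lam) ≤ (repeats lam.parts).sum := by
    rw [multBonus_eq_card_repeats]
    exact T_card_toFinset_le_sum fun x hx => lam.parts_pos (Multiset.mem_of_le tsub_le_self hx)
  calc T (supp lam) + T (gapBonus lam) + T (multBonus lam)
      ≤ ∑ x ∈ lam.parts.toFinset, x + (repeats lam.parts).sum := add_le_add sizes_le repeats_le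
    _ = n := by rw [sum_toFinset_add_sum_repeats, lam.parts_sum]

lemma supp_le_of_lt_T {n s : ℕ} (hn : n < T (s + 1)) (lam : n.Partition) : supp lam ≤ s := by
  by_contra! hs
  have : T (s + 1) ≤ T (supp lam) := T_mono hs
  have := T_supp_add_T_gapBonus_add_T_multBonus_le lam
  omega

lemma deg_le_supp_mul_succ {n : ℕ} (lam : n.Partition) : deg lam ≤ supp lam * (supp lam + 1) := by
  have gap_le : gapBonus lam ≤ supp lam := Finset.card_filter_le _ _
  have mult_le : multBonus lam ≤ supp lam := Finset.card_filter_le _ _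
  calc deg lam ≤ supp lam * (supp lam - 1) + supp lam + supp lam := by unfold deg; gcongr
    _ = supp lam * (supp lam + 1) := by
        cases supp lam with
        | zero => rfl
        | succ r => rw [Nat.add_sub_cancel]; ring

lemma deg_le_mul_pred_add_rho {s q : ℕ} (hqs : q ≤ s) (lam : (T s + q).Partition) :
    deg lam ≤ s * (s - 1) + rho q := by
  have supp_le : supp lam ≤ s := supp_le_of_lt_T (by rw [T_succ]; omega) lam
  rcases supp_le.lt_or_eq with supp_lt | supp_eq
  · calc deg lam ≤ supp lam * (supp lam + 1) := deg_le_supp_mul_succ lam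
      _ ≤ (s - 1) * s := Nat.mul_le_mul (Nat.le_sub_one_of_lt supp_lt) supp_lt
      _ ≤ s * (s - 1) + rho q := by rw [mul_comm]; exact Nat.le_add_right _ _
  · have size_le := T_supp_add_T_gapBonus_add_T_multBonus_le lam
    rw [supp_eq] at size_le
    rw [deg, supp_eq, add_assoc]
    exact Nat.add_le_add_left (add_le_rho (by omega)) _

lemma deg_eq_maxDeg {s q : ℕ} (hqs : q ≤ s) {lam : (T s + q).Partition} (hsupp : supp lam = s)
    (hbonus : gapBonus lam + multBonus lam = rho q) : deg lam = maxDeg (T s + q) := by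
  have deg_eq : deg lam = s * (s - 1) + rho q := by rw [deg, hsupp, add_assoc, hbonus]
  refine le_antisymm (Finset.le_sup (f := deg) (Finset.mem_univ lam)) (Finset.sup_le fun mu _ => ?_)
  exact (deg_le_mul_pred_add_rho hqs mu).trans_eq deg_eq.symm

lemma exists_partition_of_sizes_of_repeats {n : ℕ} {D : Finset ℕ} {R : Multiset ℕ}
    (hD : ∀ x ∈ D, 0 < x) (hR : R ⊆ D.val) (hn : ∑ x ∈ D, x + R.sum = n) :
    ∃ lam : n.Partition, lam.parts = D.val + R ∧
      supp lam = D.card ∧ gapBonus lam = (gapSet D).card ∧ multBonus lam = R.toFinset.card := by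
  have mem_D : ∀ {x}, x ∈ D.val + R → x ∈ D := fun hx => (Multiset.mem_add.1 hx).elim id (@hR _)
  let lam : n.Partition :=
    { parts := D.val + R
      parts_pos := fun hx => hD _ (mem_D hx)
      parts_sum := by rw [Multiset.sum_add, Finset.sum_val]; exact hn }
  have toFinset_eq : lam.parts.toFinset = D := by
    ext x
    exact Multiset.mem_toFinset.trans ⟨mem_D, fun hx => Multiset.mem_add.2 (Or.inl hx)⟩
  have repeats_eq : repeats lam.parts = R := by
    rw [repeats, ← Multiset.toFinset_val, toFinset_eq]
    exact add_tsub_cancel_left _ _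
  refine ⟨lam, rfl, ?_, ?_, ?_⟩
  · rw [supp, toFinset_eq]
  · rw [gapBonus_eq_card_gapSet, toFinset_eq]
  · rw [multBonus_eq_card_repeats, repeats_eq]

/-- The set `{1, …, c, c + 2, c + 4, …, c + 2g}`, of least sum among the sets of `c + g` positive
integers with `g` gaps. -/
def gappedStaircase (c : ℕ) : ℕ → Finset ℕ
  | 0 => Finset.Icc 1 c
  | g + 1 => insert (c + 2 * (g + 1)) (gappedStaircase c g)

lemma gappedStaircase_subset_Icc (c g : ℕ) : gappedStaircase c g ⊆ Finset.Icc 1 (c + 2 * g) := by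
  induction g with
  | zero => exact subset_rfl
  | succ g ih =>
    refine Finset.insert_subset (Finset.mem_Icc.2 (by omega)) (ih.trans ?_)
    exact Finset.Icc_subset_Icc_right (by omega)

lemma Icc_subset_gappedStaircase (c g : ℕ) : Finset.Icc 1 c ⊆ gappedStaircase c g := by
  induction g with
  | zero => exact subset_rfl
  | succ g ih => exact ih.trans (Finset.subset_insert _ _)

lemma notMem_gappedStaircase {c g m : ℕ} (hm : c + 2 * g < m) : m ∉ gappedStaircase c g :=
  fun h => hm.not_ge (Finset.mem_Icc.1 (gappedStaircase_subset_Icc c g h)).2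

lemma card_gappedStaircase (c g : ℕ) : (gappedStaircase c g).card = c + g := by
  induction g with
  | zero => exact Nat.card_Icc 1 c
  | succ g ih =>
    rw [gappedStaircase, Finset.card_insert_of_notMem (notMem_gappedStaircase (by omega)), ih,
      add_assoc]

lemma card_gapSet_insert_gappedStaircase {c g m : ℕ} (hm : c + 2 * g + 1 < m) :
    (gapSet (insert m (gappedStaircase c g))).card = (gapSet (gappedStaircase c g)).card + 1 := by
  have lt_m : ∀ x ∈ gappedStaircase c g, x < m := fun x hx => by
    have := Finset.mem_Icc.1 (gappedStaircase_subset_Icc c g hx)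
    omega
  rw [card_gapSet_insert lt_m, if_pos ⟨by omega, notMem_gappedStaircase (by omega)⟩]

lemma card_gapSet_gappedStaircase (c g : ℕ) : (gapSet (gappedStaircase c g)).card = g := by
  induction g with
  | zero =>
    refine Finset.card_eq_zero.2 (Finset.filter_eq_empty_iff.2 fun x hx h => h.2 ?_)
    have := Finset.mem_Icc.1 hx
    exact Finset.mem_Icc.2 (by omega)
  | succ g ih => rw [gappedStaircase, card_gapSet_insert_gappedStaircase (by omega), ih]

lemma sum_gappedStaircase (c g : ℕ) : ∑ x ∈ gappedStaircase c g, x = T (c + g) + T g := by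
  induction g with
  | zero => exact sum_Icc_one_eq_T c
  | succ g ih =>
    rw [gappedStaircase, Finset.sum_insert (notMem_gappedStaircase (by omega)), ih, ← add_assoc c,
      T_succ, T_succ]
    ring

/-- The multiset consisting of `1, …, b` and `l` further copies of `1`. -/
def paddedInterval (b l : ℕ) : Multiset ℕ := (Finset.Icc 1 b).val + Multiset.replicate l 1

lemma sum_paddedInterval (b l : ℕ) : (paddedInterval b l).sum = T b + l :=
  calc (paddedInterval b l).sum = (Finset.Icc 1 b).val.sum + l := by
        rw [paddedInterval, Multiset.sum_add, Multiset.sum_replicate, smul_eq_mul, mul_one]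
    _ = T b + l := congrArg (· + l) ((Finset.sum_val _).trans (sum_Icc_one_eq_T b))

lemma toFinset_paddedInterval {b : ℕ} (hb : 1 ≤ b) (l : ℕ) :
    (paddedInterval b l).toFinset = Finset.Icc 1 b := by
  ext x
  rw [Multiset.mem_toFinset, paddedInterval, Multiset.mem_add, Multiset.mem_replicate]
  exact or_iff_left_of_imp fun h => h.2 ▸ Finset.mem_Icc.2 ⟨le_rfl, hb⟩

lemma count_one_paddedInterval {b : ℕ} (hb : 1 ≤ b) (l : ℕ) :
    (paddedInterval b l).count 1 = l + 1 := by
  have one_mem : 1 ∈ (Finset.Icc 1 b).val := Finset.mem_Icc.2 ⟨le_rfl, hb⟩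
  rw [paddedInterval, Multiset.count_add, Multiset.count_eq_one_of_mem (Finset.nodup _) one_mem,
    Multiset.count_replicate_self, add_comm]

lemma exists_partition_of_slack {s q a b k l : ℕ} (ha : 1 ≤ a) (hb : 1 ≤ b) (hs : a + b ≤ s)
    (hq : T a + T b + (k + l) = q) :
    ∃ lam : (T s + q).Partition,
      supp lam = s ∧ gapBonus lam = a ∧ multBonus lam = b ∧ lam.parts.count 1 = l + 2 := by
  obtain ⟨g, rfl⟩ := Nat.exists_eq_add_of_le' ha
  obtain ⟨c, rfl⟩ := Nat.exists_eq_add_of_le' (le_of_add_le_left hs)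
  have b_le_c : b ≤ c := by omega
  set top := c + 2 * (g + 1) + k with top_eq
  set D := insert top (gappedStaircase c g) with D_eq
  have top_notMem : top ∉ gappedStaircase c g := notMem_gappedStaircase (by omega)
  have D_pos : ∀ x ∈ D, 0 < x := Finset.forall_mem_insert _ _ _ |>.2
    ⟨by omega, fun x hx => (Finset.mem_Icc.1 (gappedStaircase_subset_Icc c g hx)).1⟩
  have Icc_subset : Finset.Icc 1 b ⊆ D :=
    (Finset.Icc_subset_Icc_right b_le_c).trans
      ((Icc_subset_gappedStaircase c g).trans (Finset.subset_insert _ _))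
  have repeats_subset : paddedInterval b l ⊆ D.val := fun x hx =>
    Icc_subset (toFinset_paddedInterval hb l ▸ Multiset.mem_toFinset.2 hx)
  have size_eq : ∑ x ∈ D, x + (paddedInterval b l).sum = T (c + (g + 1)) + q := by
    rw [D_eq, Finset.sum_insert top_notMem, sum_gappedStaircase, sum_paddedInterval, ← hq,
      ← add_assoc c, T_succ, T_succ, top_eq]
    ring
  obtain ⟨lam, parts_eq, supp_eq, gap_eq, mult_eq⟩ :=
    exists_partition_of_sizes_of_repeats D_pos repeats_subset size_eq
  refine ⟨lam, ?_, ?_, ?_, ?_⟩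
  · rw [supp_eq, D_eq, Finset.card_insert_of_notMem top_notMem, card_gappedStaircase, add_assoc]
  · rw [gap_eq, D_eq, card_gapSet_insert_gappedStaircase (by omega), card_gapSet_gappedStaircase]
  · rw [mult_eq, toFinset_paddedInterval hb, Nat.card_Icc, Nat.add_sub_cancel]
  · have one_mem : 1 ∈ D.val := Icc_subset (Finset.mem_Icc.2 ⟨le_rfl, hb⟩)
    rw [parts_eq, Multiset.count_add, Multiset.count_eq_one_of_mem D.nodup one_mem,
      count_one_paddedInterval hb, add_comm]

lemma slack_succ_le_card_profile {s q a b : ℕ} (ha : 1 ≤ a) (hb : 1 ≤ b) (hs : a + b ≤ s)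
    (hbudget : T a + T b ≤ q) :
    q - T a - T b + 1 ≤ (Finset.univ.filter fun lam : (T s + q).Partition =>
      supp lam = s ∧ gapBonus lam = a ∧ multBonus lam = b).card := by
  rw [← Finset.card_range (q - T a - T b + 1)]
  refine Finset.card_le_card_of_surjOn (fun lam => lam.parts.count 1 - 2) fun l hl => ?_
  have hl : l < q - T a - T b + 1 := Finset.mem_range.1 hl
  obtain ⟨lam, hsupp, hgap, hmult, hcount⟩ := exists_partition_of_slack (q := q)
    (k := q - T a - T b - l) (l := l) ha hb hs (by omega)
  refine ⟨lam, ?_, Nat.sub_eq_of_eq_add hcount⟩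
  exact Finset.mem_coe.2 (Finset.mem_filter.2 ⟨Finset.mem_univ _, hsupp, hgap, hmult⟩)

/-- slack family lower bound: for a mixed realized profile `(a, b)`,
the fibre of maximizers with that profile has at least `q - T a - T b + 1` elements. -/
theorem slack_family (s q : ℕ) (hs : 1 ≤ s) (hqs : q ≤ s)
    (a b : ℕ) (ha : 1 ≤ a) (hb : 1 ≤ b)
    (hab : a + b = rho q) (hbudget : T a + T b ≤ q) :
    q - T a - T b + 1 ≤
      (Finset.univ.filter
        (fun lam : (T s + q).Partition =>
          deg lam = maxDeg (T s + q) ∧ gapBonus lam = a ∧ multBonus lam = b)).card := by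
  have hsum : a + b ≤ s := (add_le_add (le_T a) (le_T b)).trans (hbudget.trans hqs)
  refine (slack_succ_le_card_profile ha hb hsum hbudget).trans (Finset.card_le_card ?_)
  refine Finset.monotone_filter_right _ fun lam _ ⟨hsupp, hgap, hmult⟩ => ⟨?_, hgap, hmult⟩
  exact deg_eq_maxDeg hqs hsupp (by rw [hgap, hmult, hab])

end PartitionDegree
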